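/- arXiv:2605.24694 — 7 statements merged into one kernel-verified Lean document; each statement's English description precedes it below -/
import Mathlib

section
/- Let n ≥ 1, let A, B ∈ Matrix n n ℂ be Hermitian matrices, and let F : ℝ → ℝ be a differentiable convex function. Then Klein's inequality holds: Tr(F(B)) − Tr(F(A)) − Tr(F'(A)(B − A)) ≥ 0. -/
open scoped ComplexOrder

lemma klein_cfc_eq {n : ℕ} {A : Matrix (Fin n) (Fin n) ℂ} (hA : A.IsHermitian) (g : ℝ → ℝ) :
    hA.cfc g = (hA.eigenvectorUnitary : Matrix (Fin n) (Fin n) ℂ) *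
      Matrix.diagonal (fun i => ((g (hA.eigenvalues i) : ℝ) : ℂ)) *
      star (hA.eigenvectorUnitary : Matrix (Fin n) (Fin n) ℂ) := by
  rw [Matrix.IsHermitian.cfc, Unitary.conjStarAlgAut_apply]
  rfl

lemma klein_cfc_id {n : ℕ} {A : Matrix (Fin n) (Fin n) ℂ} (hA : A.IsHermitian) :
    hA.cfc (fun x => x) = A := by
  conv_rhs => rw [hA.spectral_theorem]
  rfl

lemma klein_cfc_one {n : ℕ} {A : Matrix (Fin n) (Fin n) ℂ} (hA : A.IsHermitian) :
    hA.cfc (fun _ => 1) = 1 := by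
  rw [klein_cfc_eq]
  simp

lemma klein_cfc_mul {n : ℕ} {A : Matrix (Fin n) (Fin n) ℂ} (hA : A.IsHermitian) (g h : ℝ → ℝ) :
    hA.cfc g * hA.cfc h = hA.cfc (fun x => g x * h x) := by
  have hU : star (hA.eigenvectorUnitary : Matrix (Fin n) (Fin n) ℂ) *
    (hA.eigenvectorUnitary : Matrix (Fin n) (Fin n) ℂ) = 1 := by simp
  simp only [klein_cfc_eq, Complex.ofReal_mul]
  rw [← Matrix.diagonal_mul_diagonal]
  simp only [Matrix.mul_assoc]
  rw [← Matrix.mul_assoc (star _) (hA.eigenvectorUnitary : Matrix (Fin n) (Fin n) ℂ), hU,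
    Matrix.one_mul]

lemma klein_trace {n : ℕ} {A B : Matrix (Fin n) (Fin n) ℂ} (hA : A.IsHermitian)
    (hB : B.IsHermitian) (g h : ℝ → ℝ) :
    (hA.cfc g * hB.cfc h).trace = ((∑ i, ∑ j, g (hA.eigenvalues i) * h (hB.eigenvalues j) *
      Complex.normSq ((star (hA.eigenvectorUnitary : Matrix (Fin n) (Fin n) ℂ) *
        (hB.eigenvectorUnitary : Matrix (Fin n) (Fin n) ℂ)) i j) : ℝ) : ℂ) := by
  rw [klein_cfc_eq, klein_cfc_eq]
  generalize (hA.eigenvectorUnitary : Matrix (Fin n) (Fin n) ℂ) = U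
  generalize (hB.eigenvectorUnitary : Matrix (Fin n) (Fin n) ℂ) = V
  generalize hD : Matrix.diagonal (fun i => ((g (hA.eigenvalues i) : ℝ) : ℂ)) = D
  generalize hE : Matrix.diagonal (fun i => ((h (hB.eigenvalues i) : ℝ) : ℂ)) = E
  have h1 : (U * D * star U * (V * E * star V)).trace
      = (D * ((star U * V) * E * star (star U * V))).trace := by
    rw [Matrix.mul_assoc U, Matrix.mul_assoc U, Matrix.trace_mul_comm]
    simp only [star_mul, star_star, Matrix.mul_assoc]
  rw [h1]
  generalize star U * V = W
  subst hD hE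
  push_cast
  simp only [Matrix.trace, Matrix.diag_apply, Matrix.diagonal_mul]
  refine Finset.sum_congr rfl fun i _ => ?_
  rw [Matrix.mul_apply, Finset.mul_sum]
  refine Finset.sum_congr rfl fun j _ => ?_
  rw [Matrix.mul_diagonal, Matrix.star_apply, Complex.normSq_eq_conj_mul_self]
  simp only [RCLike.star_def]
  ring

lemma klein_scalar (F f : ℝ → ℝ) (hF : ∀ x : ℝ, HasDerivAt F (f x) x)
    (hconv : ConvexOn ℝ Set.univ F) (a b : ℝ) : 0 ≤ F b - F a - f a * (b - a) := by
  rcases lt_trichotomy a b with h | h | h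
  · have := hconv.le_slope_of_hasDerivAt (Set.mem_univ a) (Set.mem_univ b) h (hF a)
    rw [slope_def_field, le_div_iff₀ (by linarith)] at this
    linarith
  · subst h; simp
  · have := hconv.slope_le_of_hasDerivAt (Set.mem_univ b) (Set.mem_univ a) h (hF a)
    rw [slope_def_field, div_le_iff₀ (by linarith)] at this
    linarith

/-- Klein's inequality: for Hermitian matrices `A`, `B` and a differentiable convex
function `F : ℝ → ℝ` with derivative `F' = f`,
`Tr(F(B)) − Tr(F(A)) − Tr(F'(A)(B − A)) ≥ 0`, where `F(A)` etc. are defined via the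
continuous functional calculus for Hermitian matrices. -/
theorem klein_inequality
    (n : ℕ) (hn : 1 ≤ n)
    (A B : Matrix (Fin n) (Fin n) ℂ)
    (hA : A.IsHermitian) (hB : B.IsHermitian)
    (F f : ℝ → ℝ)
    (hF : ∀ x : ℝ, HasDerivAt F (f x) x)
    (hconv : ConvexOn ℝ Set.univ F) :
    0 ≤ (hB.cfc F).trace - (hA.cfc F).trace - (hA.cfc f * (B - A)).trace := by
  have e1 := klein_trace hA hB (fun _ => 1) F
  have e2 := klein_trace hA hB F (fun _ => 1)
  have e3 := klein_trace hA hB f (fun x => x)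
  have e4 := klein_trace hA hB (fun x => f x * x) (fun _ => 1)
  rw [klein_cfc_one, Matrix.one_mul] at e1
  rw [klein_cfc_one, Matrix.mul_one] at e2
  rw [klein_cfc_id] at e3
  rw [klein_cfc_one, Matrix.mul_one, ← klein_cfc_mul, klein_cfc_id] at e4
  rw [Matrix.mul_sub, Matrix.trace_sub, e1, e2, e3, e4]
  norm_cast
  simp only [← Finset.sum_sub_distrib]
  refine Finset.sum_nonneg fun i _ => Finset.sum_nonneg fun j _ => ?_
  have := mul_nonneg (klein_scalar F f hF hconv (hA.eigenvalues i) (hB.eigenvalues j))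
    (Complex.normSq_nonneg ((star (hA.eigenvectorUnitary : Matrix (Fin n) (Fin n) ℂ) *
        (hB.eigenvectorUnitary : Matrix (Fin n) (Fin n) ℂ)) i j))
  refine this.trans_eq ?_
  push_cast
  ring
end

section
/- Let n ≥ 1, let A, B ∈ Matrix n n ℂ be Hermitian matrices, let F : ℝ → ℝ be a twice differentiable convex function, and let τ ∈ [0,1]. Then 0 ≤ (1−τ) Tr(F(A)) + τ Tr(F(B)) − Tr(F((1−τ)A + τB)) ≤ τ(1−τ) Tr((F'(B) − F'(A))(B − A)). -/
open scoped ComplexOrder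

lemma convex_tangent_le (F f : ℝ → ℝ) (hF : ∀ x : ℝ, HasDerivAt F (f x) x)
    (hconv : ConvexOn ℝ Set.univ F) (x y : ℝ) : 0 ≤ F x - F y - f y * (x - y) := by
  rcases lt_trichotomy x y with h | h | h
  · have := hconv.slope_le_of_hasDerivAt (Set.mem_univ x) (Set.mem_univ y) h (hF y)
    rw [slope_def_field, div_le_iff₀ (by linarith)] at this
    linarith
  · subst h; simp
  · have := hconv.le_slope_of_hasDerivAt (Set.mem_univ y) (Set.mem_univ x) h (hF y)
    rw [slope_def_field, le_div_iff₀ (by linarith)] at this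
    linarith

/-- Overlap formula for the trace of a product of functions of two Hermitian matrices. -/
lemma trace_cfc_mul_cfc {n : ℕ} {X Y : Matrix (Fin n) (Fin n) ℂ}
    (hX : X.IsHermitian) (hY : Y.IsHermitian) (g h : ℝ → ℝ) :
    (hX.cfc g * hY.cfc h).trace =
      ((∑ i, ∑ j, g (hX.eigenvalues i) * h (hY.eigenvalues j) *
        Complex.normSq ((star (hX.eigenvectorUnitary : Matrix (Fin n) (Fin n) ℂ) *
          (hY.eigenvectorUnitary : Matrix (Fin n) (Fin n) ℂ)) i j) : ℝ) : ℂ) := by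
  unfold Matrix.IsHermitian.cfc
  rw [Unitary.conjStarAlgAut_apply, Unitary.conjStarAlgAut_apply]
  generalize (hX.eigenvectorUnitary : Matrix (Fin n) (Fin n) ℂ) = U
  generalize (hY.eigenvectorUnitary : Matrix (Fin n) (Fin n) ℂ) = V
  set D := Matrix.diagonal ((RCLike.ofReal : ℝ → ℂ) ∘ g ∘ hX.eigenvalues) with hD
  set E := Matrix.diagonal ((RCLike.ofReal : ℝ → ℂ) ∘ h ∘ hY.eigenvalues) with hE
  have h1 : (U * D * star U * (V * E * star V)).trace
      = ((D * (star U * V)) * (E * star (star U * V))).trace := by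
    rw [star_mul, star_star, Matrix.mul_assoc U D, Matrix.mul_assoc U, Matrix.trace_mul_comm U]
    simp only [Matrix.mul_assoc]
  rw [h1]
  generalize star U * V = W
  rw [Matrix.trace]
  push_cast
  refine Finset.sum_congr rfl fun i _ => ?_
  rw [Matrix.diag_apply, Matrix.mul_apply]
  refine Finset.sum_congr rfl fun j _ => ?_
  rw [hD, hE, Matrix.diagonal_mul, Matrix.diagonal_mul, Matrix.star_apply,
    Complex.normSq_eq_conj_mul_self]
  simp
  ring

lemma hermitian_cfc_one {n : ℕ} {X : Matrix (Fin n) (Fin n) ℂ} (hX : X.IsHermitian) :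
    hX.cfc (fun _ => 1) = 1 := by
  rw [← hX.cfc_eq]
  exact cfc_const_one ℝ X hX

lemma hermitian_cfc_id {n : ℕ} {X : Matrix (Fin n) (Fin n) ℂ} (hX : X.IsHermitian) :
    hX.cfc (fun x => x) = X := by
  rw [← hX.cfc_eq]
  exact cfc_id' ℝ X hX

lemma hermitian_cfc_mul_self {n : ℕ} {X : Matrix (Fin n) (Fin n) ℂ} (hX : X.IsHermitian)
    (f : ℝ → ℝ) : hX.cfc (fun x => x * f x) = X * hX.cfc f := by
  conv_rhs => enter [1]; rw [← hermitian_cfc_id hX]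
  unfold Matrix.IsHermitian.cfc
  rw [← map_mul, Matrix.diagonal_mul_diagonal]
  congr 2
  ext i
  simp

/-- Klein's inequality. -/
lemma klein_inequality_s14 {n : ℕ} {X Y : Matrix (Fin n) (Fin n) ℂ}
    (hX : X.IsHermitian) (hY : Y.IsHermitian) (F f : ℝ → ℝ)
    (hF : ∀ x : ℝ, HasDerivAt F (f x) x) (hconv : ConvexOn ℝ Set.univ F) :
    ∃ r : ℝ, 0 ≤ r ∧
      (hX.cfc F).trace - (hY.cfc F).trace - (hY.cfc f * (X - Y)).trace = (r : ℂ) := by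
  have e1 := trace_cfc_mul_cfc hX hY F (fun _ => 1)
  have e2 := trace_cfc_mul_cfc hX hY (fun _ => 1) F
  have e3 := trace_cfc_mul_cfc hX hY (fun x => x) f
  have e4 := trace_cfc_mul_cfc hX hY (fun _ => 1) (fun x => x * f x)
  rw [hermitian_cfc_one, mul_one] at e1
  rw [hermitian_cfc_one, one_mul] at e2
  rw [hermitian_cfc_id] at e3
  rw [hermitian_cfc_one, one_mul, hermitian_cfc_mul_self] at e4
  rw [Matrix.trace_mul_comm, Matrix.sub_mul, Matrix.trace_sub, e1, e2, e3, e4]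
  refine ⟨_, ?_, by rw [← Complex.ofReal_sub, ← Complex.ofReal_sub, ← Complex.ofReal_sub]⟩
  simp only [← Finset.sum_sub_distrib]
  refine Finset.sum_nonneg fun i _ => Finset.sum_nonneg fun j _ => ?_
  have h := mul_nonneg (convex_tangent_le F f hF hconv (hX.eigenvalues i) (hY.eigenvalues j))
    (Complex.normSq_nonneg ((star (hX.eigenvectorUnitary : Matrix (Fin n) (Fin n) ℂ) *
          (hY.eigenvectorUnitary : Matrix (Fin n) (Fin n) ℂ)) i j))
  refine h.trans_eq ?_
  ring

/-- Two-sided trace inequality for a twice differentiable convex function `F` with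
derivative `f = F'` (and second derivative `f' = F''`), for Hermitian matrices `A`, `B`
and `τ ∈ [0,1]`:
`0 ≤ (1−τ) Tr F(A) + τ Tr F(B) − Tr F((1−τ)A + τB)
   ≤ τ(1−τ) Tr((F'(B) − F'(A))(B − A))`,
where functions of Hermitian matrices are given by the functional calculus. -/
theorem two_sided_convex_trace_inequality
    (n : ℕ) (hn : 1 ≤ n)
    (A B : Matrix (Fin n) (Fin n) ℂ)
    (hA : A.IsHermitian) (hB : B.IsHermitian)
    (F f f' : ℝ → ℝ)
    (hF : ∀ x : ℝ, HasDerivAt F (f x) x)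
    (hf : ∀ x : ℝ, HasDerivAt f (f' x) x)
    (hconv : ConvexOn ℝ Set.univ F)
    (τ : ℝ) (hτ : τ ∈ Set.Icc (0 : ℝ) 1)
    (hC : ((1 - τ) • A + τ • B).IsHermitian) :
    0 ≤ ((1 - τ : ℝ) : ℂ) * (hA.cfc F).trace + (τ : ℂ) * (hB.cfc F).trace
          - (hC.cfc F).trace
    ∧ ((1 - τ : ℝ) : ℂ) * (hA.cfc F).trace + (τ : ℂ) * (hB.cfc F).trace
          - (hC.cfc F).trace
        ≤ ((τ * (1 - τ) : ℝ) : ℂ) * ((hB.cfc f - hA.cfc f) * (B - A)).trace := by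
  obtain ⟨h0, h1⟩ := hτ
  have h1' : 0 ≤ 1 - τ := by linarith
  have dA : A - ((1 - τ) • A + τ • B) = (-τ) • (B - A) := by module
  have dB : B - ((1 - τ) • A + τ • B) = (1 - τ) • (B - A) := by module
  have dA' : ((1 - τ) • A + τ • B) - A = τ • (B - A) := by module
  have dB' : ((1 - τ) • A + τ • B) - B = (-(1 - τ)) • (B - A) := by module
  obtain ⟨r1, p1, k1⟩ := klein_inequality_s14 hA hC F f hF hconv
  obtain ⟨r2, p2, k2⟩ := klein_inequality_s14 hB hC F f hF hconv
  obtain ⟨r3, p3, k3⟩ := klein_inequality_s14 hC hA F f hF hconv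
  obtain ⟨r4, p4, k4⟩ := klein_inequality_s14 hC hB F f hF hconv
  rw [dA, Matrix.mul_smul, Matrix.trace_smul, Complex.real_smul] at k1
  rw [dB, Matrix.mul_smul, Matrix.trace_smul, Complex.real_smul] at k2
  rw [dA', Matrix.mul_smul, Matrix.trace_smul, Complex.real_smul] at k3
  rw [dB', Matrix.mul_smul, Matrix.trace_smul, Complex.real_smul] at k4
  constructor
  · have h : (0 : ℂ) ≤ (((1 - τ) * r1 + τ * r2 : ℝ) : ℂ) :=
      Complex.zero_le_real.mpr (by positivity)
    refine h.trans_eq ?_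
    push_cast at k1 k2 ⊢
    linear_combination (-(1 - (τ : ℂ))) * k1 - (τ : ℂ) * k2
  · rw [← sub_nonneg]
    have h : (0 : ℂ) ≤ (((1 - τ) * r3 + τ * r4 : ℝ) : ℂ) :=
      Complex.zero_le_real.mpr (by positivity)
    refine h.trans_eq ?_
    rw [Matrix.sub_mul, Matrix.trace_sub]
    push_cast at k3 k4 ⊢
    linear_combination (-(1 - (τ : ℂ))) * k3 - (τ : ℂ) * k4
end

section
/- Let n ≥ 1, let A, B ∈ Matrix n n ℂ be Hermitian matrices, and let τ ∈ [0,1]. Then the Peierls–Bogoliubov inequality holds: Tr(exp((1−τ)A + τB)) ≤ (Tr(exp A))^{1−τ} · (Tr(exp B))^{τ}; that is, τ ↦ Tr(exp((1−τ)A + τB)) is logarithmically convex on [0,1]. -/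
open Matrix in
lemma pb_trace {n : ℕ} {A : Matrix (Fin n) (Fin n) ℂ} (hA : A.IsHermitian) :
    ((hA.cfc Real.exp).trace).re = ∑ j, Real.exp (hA.eigenvalues j) := by
  rw [Matrix.IsHermitian.cfc, Unitary.conjStarAlgAut_apply, Matrix.trace_mul_comm, ← mul_assoc]
  rw [Unitary.coe_star_mul_self, one_mul, Matrix.trace_diagonal]
  simp [-Complex.ofReal_exp]

open Matrix in
lemma pb_diag {n : ℕ} (W : Matrix (Fin n) (Fin n) ℂ) (d : Fin n → ℝ) (i : Fin n) :
    ((W * diagonal (fun j => (d j : ℂ)) * star W) i i).re = ∑ j, Complex.normSq (W i j) * d j := by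
  rw [Matrix.mul_apply, Complex.re_sum]
  refine Finset.sum_congr rfl fun j _ => ?_
  simp only [Matrix.mul_diagonal, Matrix.star_apply, Complex.normSq_apply]
  simp
  ring

open Matrix in
lemma pb_row {n : ℕ} (W : Matrix (Fin n) (Fin n) ℂ) (h : W * star W = 1) (i : Fin n) :
    ∑ j, Complex.normSq (W i j) = 1 := by
  have := pb_diag W (fun _ => 1) i
  simpa [h] using this.symm

open Matrix in
lemma pb_col {n : ℕ} (W : Matrix (Fin n) (Fin n) ℂ) (h : star W * W = 1) (j : Fin n) :
    ∑ i, Complex.normSq (W i j) = 1 := by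
  have := pb_row (star W) (by simpa using h) j
  simpa [Matrix.star_apply] using this

open Matrix in
lemma pb_peierls {n : ℕ} {A : Matrix (Fin n) (Fin n) ℂ} (hA : A.IsHermitian)
    (U : Matrix.unitaryGroup (Fin n) ℂ) :
    ∑ i, Real.exp (((star (U : Matrix (Fin n) (Fin n) ℂ) * A * U) i i).re)
      ≤ ∑ j, Real.exp (hA.eigenvalues j) := by
  set W := star U * hA.eigenvectorUnitary with hW
  have h1 : (W : Matrix (Fin n) (Fin n) ℂ) * star (W : Matrix (Fin n) (Fin n) ℂ) = 1 :=
    Unitary.coe_mul_star_self W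
  have h2 : star (W : Matrix (Fin n) (Fin n) ℂ) * (W : Matrix (Fin n) (Fin n) ℂ) = 1 :=
    Unitary.coe_star_mul_self W
  have h3 : star (U : Matrix (Fin n) (Fin n) ℂ) * A * U
      = W * diagonal (fun j => (hA.eigenvalues j : ℂ)) * star (W : Matrix (Fin n) (Fin n) ℂ) := by
    conv_lhs => rw [hA.spectral_theorem, Unitary.conjStarAlgAut_apply]
    simp only [hW, Submonoid.coe_mul, Unitary.coe_star, star_mul, star_star, mul_assoc]
    rfl
  have h4 : ∀ i, Real.exp (((star (U : Matrix (Fin n) (Fin n) ℂ) * A * U) i i).re)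
      ≤ ∑ j, Complex.normSq ((W : Matrix (Fin n) (Fin n) ℂ) i j) * Real.exp (hA.eigenvalues j) := by
    intro i
    rw [h3, pb_diag]
    have := convexOn_exp.map_sum_le (t := Finset.univ)
      (w := fun j => Complex.normSq ((W : Matrix (Fin n) (Fin n) ℂ) i j))
      (p := hA.eigenvalues) (fun j _ => Complex.normSq_nonneg _) (pb_row _ h1 i) (by simp)
    simpa only [smul_eq_mul] using this
  refine (Finset.sum_le_sum fun i _ => h4 i).trans ?_
  rw [Finset.sum_comm]
  simp_rw [← Finset.sum_mul, pb_col _ h2, one_mul]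
  rfl

lemma pb_holder {n : ℕ} (a b : Fin n → ℝ) (τ : ℝ) (hτ : τ ∈ Set.Icc (0 : ℝ) 1) :
    ∑ i, Real.exp ((1 - τ) * a i + τ * b i)
      ≤ (∑ i, Real.exp (a i)) ^ (1 - τ) * (∑ i, Real.exp (b i)) ^ τ := by
  rcases hτ.1.eq_or_lt with rfl | h0
  · simp
  rcases hτ.2.eq_or_lt with rfl | h1
  · simp
  have hp : 0 < 1 - τ := by linarith
  have hpq : Real.HolderConjugate (1 - τ)⁻¹ τ⁻¹ := by
    rw [Real.holderConjugate_iff]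
    refine ⟨(one_lt_inv₀ hp).2 (by linarith), by simp⟩
  have := Real.inner_le_Lp_mul_Lq_of_nonneg Finset.univ (f := fun i => Real.exp ((1 - τ) * a i))
    (g := fun i => Real.exp (τ * b i)) hpq (fun _ _ => (Real.exp_pos _).le)
    (fun _ _ => (Real.exp_pos _).le)
  simp only [← Real.exp_add, ← Real.exp_mul, one_div, inv_inv] at this
  convert this using 6
  · field_simp
  · field_simp

theorem peierls_bogoliubov
    (n : ℕ) (hn : 1 ≤ n)
    (A B : Matrix (Fin n) (Fin n) ℂ)
    (hA : A.IsHermitian) (hB : B.IsHermitian)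
    (τ : ℝ) (hτ : τ ∈ Set.Icc (0 : ℝ) 1)
    (hC : ((1 - τ) • A + τ • B).IsHermitian) :
    ((hC.cfc Real.exp).trace).re
      ≤ ((hA.cfc Real.exp).trace).re ^ (1 - τ) * ((hB.cfc Real.exp).trace).re ^ τ := by
  rw [pb_trace, pb_trace, pb_trace]
  set U := hC.eigenvectorUnitary with hU
  have key : ∀ i, hC.eigenvalues i
      = (1 - τ) * ((star (U : Matrix (Fin n) (Fin n) ℂ) * A * U) i i).re
        + τ * ((star (U : Matrix (Fin n) (Fin n) ℂ) * B * U) i i).re := by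
    intro i
    have h := congrFun (congrFun hC.conjStarAlgAut_star_eigenvectorUnitary i) i
    rw [Unitary.conjStarAlgAut_star_apply, Matrix.diagonal_apply_eq] at h
    have h' := congrArg Complex.re h
    simp only [mul_add, add_mul, Matrix.mul_smul, Matrix.smul_mul, Matrix.add_apply,
      Matrix.smul_apply, Complex.add_re, Complex.smul_re, smul_eq_mul] at h'
    exact h'.symm
  simp_rw [key]
  refine (pb_holder _ _ τ hτ).trans ?_
  have hp : 0 ≤ 1 - τ := by linarith [hτ.2]
  refine mul_le_mul (Real.rpow_le_rpow (by positivity) (pb_peierls hA U) hp)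
    (Real.rpow_le_rpow (by positivity) (pb_peierls hB U) hτ.1) (by positivity) (by positivity)
end

section
/- Let n ≥ 1, let A, B ∈ Matrix n n ℂ be positive semidefinite Hermitian matrices, let p ≥ 1 be a real number, and let τ ∈ [0,1]. Then (Tr(((1−τ)A + τB)^p))^{1/p} ≤ (1−τ) (Tr(A^p))^{1/p} + τ (Tr(B^p))^{1/p}. -/
open scoped ComplexOrder

lemma aux_trace_cfc {n : ℕ} {A : Matrix (Fin n) (Fin n) ℂ} (hA : A.IsHermitian) (f : ℝ → ℝ) :
    ((hA.cfc f).trace).re = ∑ i, f (hA.eigenvalues i) := by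
  rw [Matrix.IsHermitian.cfc, Unitary.conjStarAlgAut_apply, Matrix.trace_mul_comm, ← mul_assoc,
    Unitary.coe_star_mul_self, one_mul, Matrix.trace_diagonal]
  simp

lemma aux_entry {n : ℕ} (W : Matrix (Fin n) (Fin n) ℂ) (d : Fin n → ℝ) (i : Fin n) :
    ((W * Matrix.diagonal (fun j => (d j : ℂ)) * star W) i i).re
      = ∑ j, Complex.normSq (W i j) * d j := by
  rw [Matrix.mul_apply]
  simp only [Matrix.mul_diagonal, Matrix.star_apply, Complex.re_sum]
  refine Finset.sum_congr rfl fun j _ => ?_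
  simp [Complex.normSq_apply]
  ring

lemma aux_row {n : ℕ} (W : Matrix (Fin n) (Fin n) ℂ) (hW : W * star W = 1) (i : Fin n) :
    ∑ j, Complex.normSq (W i j) = 1 := by
  have h := aux_entry W (fun _ => 1) i
  simp only [Complex.ofReal_one, mul_one] at h
  rw [← h]
  have : (Matrix.diagonal fun _ : Fin n => (1 : ℂ)) = 1 := Matrix.diagonal_one
  rw [this, mul_one, hW]
  simp

lemma aux_peierls {n : ℕ} {A : Matrix (Fin n) (Fin n) ℂ} (hA : A.PosSemidef)
    (U : Matrix (Fin n) (Fin n) ℂ) (hU : star U * U = 1) (p : ℝ) (hp : 1 ≤ p) :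
    (∀ i, 0 ≤ ((star U * A * U) i i).re) ∧
    ∑ i, ((star U * A * U) i i).re ^ p ≤ ((hA.1.cfc fun x => x ^ p).trace).re := by
  have hU' : U * star U = 1 := mul_eq_one_comm.mp hU
  set V : Matrix (Fin n) (Fin n) ℂ := (hA.1.eigenvectorUnitary : Matrix (Fin n) (Fin n) ℂ) with hV
  have hV1 : star V * V = 1 := Unitary.coe_star_mul_self _
  have hV2 : V * star V = 1 := Unitary.coe_mul_star_self _
  set d := hA.1.eigenvalues with hd
  have hd0 : ∀ j, 0 ≤ d j := hA.eigenvalues_nonneg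
  have hsp : A = V * Matrix.diagonal (fun j => (d j : ℂ)) * star V := by
    have := hA.1.spectral_theorem
    rw [Unitary.conjStarAlgAut_apply] at this
    exact this
  set W := star U * V with hW
  have hW1 : W * star W = 1 := by
    rw [hW, star_mul, star_star, mul_assoc, ← mul_assoc V, hV2, one_mul, hU]
  have hW2 : star W * W = 1 := mul_eq_one_comm.mp hW1
  have hent : ∀ i, ((star U * A * U) i i).re = ∑ j, Complex.normSq (W i j) * d j := by
    intro i
    rw [← aux_entry]
    congr 2
    rw [hsp, hW, star_mul, star_star]
    simp only [mul_assoc]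
  have hrow := aux_row W hW1
  have hcol : ∀ j, ∑ i, Complex.normSq (W i j) = 1 := by
    intro j
    have := aux_row (star W) (by rw [star_star]; exact hW2) j
    simpa [Matrix.star_apply] using this
  constructor
  · intro i
    rw [hent]
    exact Finset.sum_nonneg fun j _ => mul_nonneg (Complex.normSq_nonneg _) (hd0 j)
  · rw [aux_trace_cfc]
    calc ∑ i, ((star U * A * U) i i).re ^ p
        = ∑ i, (∑ j, Complex.normSq (W i j) * d j) ^ p := by simp only [hent]
      _ ≤ ∑ i, ∑ j, Complex.normSq (W i j) * d j ^ p :=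
          Finset.sum_le_sum fun i _ => Real.rpow_arith_mean_le_arith_mean_rpow _ _ _
            (fun j _ => Complex.normSq_nonneg _) (hrow i) (fun j _ => hd0 j) hp
      _ = ∑ j, d j ^ p := by
          rw [Finset.sum_comm]
          simp only [← Finset.sum_mul, hcol, one_mul]

lemma aux_scale {n : ℕ} (a : Fin n → ℝ) (ha : ∀ i, 0 ≤ a i) (t : ℝ) (ht : 0 ≤ t) (p : ℝ)
    (hp : 1 ≤ p) :
    (∑ i, (t * a i) ^ p) ^ (1 / p) = t * (∑ i, a i ^ p) ^ (1 / p) := by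
  have h : ∀ i, (t * a i) ^ p = t ^ p * a i ^ p := fun i => Real.mul_rpow ht (ha i)
  simp only [h, ← Finset.mul_sum]
  rw [Real.mul_rpow (by positivity) (Finset.sum_nonneg fun i _ => Real.rpow_nonneg (ha i) _),
    ← Real.rpow_mul ht, mul_one_div_cancel (by positivity), Real.rpow_one]


/-- Minkowski-type inequality for Schatten `p`-traces of positive semidefinite matrices:
for `p ≥ 1`, `τ ∈ [0,1]`,
`(Tr(((1−τ)A + τB)^p))^{1/p} ≤ (1−τ)(Tr A^p)^{1/p} + τ (Tr B^p)^{1/p}`,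
where `M^p` denotes the functional calculus applied with `fun x => x ^ p` (real power). -/
theorem trace_power_convexity
    (n : ℕ) (hn : 1 ≤ n)
    (A B : Matrix (Fin n) (Fin n) ℂ)
    (hA : A.PosSemidef) (hB : B.PosSemidef)
    (p : ℝ) (hp : 1 ≤ p)
    (τ : ℝ) (hτ : τ ∈ Set.Icc (0 : ℝ) 1)
    (hC : ((1 - τ) • A + τ • B).PosSemidef) :
    ((hC.1.cfc fun x => x ^ p).trace).re ^ (1 / p)
      ≤ (1 - τ) * ((hA.1.cfc fun x => x ^ p).trace).re ^ (1 / p)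
        + τ * ((hB.1.cfc fun x => x ^ p).trace).re ^ (1 / p) := by

  obtain ⟨h0, h1⟩ := hτ
  set U : Matrix (Fin n) (Fin n) ℂ := (hC.1.eigenvectorUnitary : Matrix (Fin n) (Fin n) ℂ) with hUdef
  have hU : star U * U = 1 := Unitary.coe_star_mul_self _
  obtain ⟨hA0, hA1⟩ := aux_peierls hA U hU p hp
  obtain ⟨hB0, hB1⟩ := aux_peierls hB U hU p hp
  have hev : ∀ i, hC.1.eigenvalues i
      = (1 - τ) * ((star U * A * U) i i).re + τ * ((star U * B * U) i i).re := by
    intro i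
    have hsp := hC.1.spectral_theorem
    rw [Unitary.conjStarAlgAut_apply] at hsp
    have h2 : star U * ((1 - τ) • A + τ • B) * U
        = Matrix.diagonal (RCLike.ofReal ∘ hC.1.eigenvalues) := by
      calc star U * ((1 - τ) • A + τ • B) * U
          = star U * (U * Matrix.diagonal (RCLike.ofReal ∘ hC.1.eigenvalues) * star U) * U :=
            congrArg (fun M => star U * M * U) hsp
        _ = (star U * U) * Matrix.diagonal (RCLike.ofReal ∘ hC.1.eigenvalues) * (star U * U) := by
            simp only [mul_assoc]
        _ = _ := by rw [hU, one_mul, mul_one]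
    have h3 := congrArg (fun M : Matrix (Fin n) (Fin n) ℂ => (M i i).re) h2
    simp only [mul_add, add_mul, mul_smul_comm, smul_mul_assoc, Matrix.add_apply,
      Matrix.smul_apply, Matrix.diagonal_apply_eq, Complex.add_re, Complex.smul_re,
      smul_eq_mul] at h3
    rw [h3]
    simp
  have hs : 0 ≤ 1 - τ := by linarith
  have hp0 : 0 ≤ 1 / p := by positivity
  rw [aux_trace_cfc]
  simp only [hev]
  refine (Real.Lp_add_le_of_nonneg _ hp (fun i _ => mul_nonneg hs (hA0 i))
    (fun i _ => mul_nonneg h0 (hB0 i))).trans ?_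
  rw [aux_scale _ hA0 _ hs _ hp, aux_scale _ hB0 _ h0 _ hp]
  have hnA : 0 ≤ ∑ i, ((star U * A * U) i i).re ^ p :=
    Finset.sum_nonneg fun i _ => Real.rpow_nonneg (hA0 i) _
  have hnB : 0 ≤ ∑ i, ((star U * B * U) i i).re ^ p :=
    Finset.sum_nonneg fun i _ => Real.rpow_nonneg (hB0 i) _
  exact add_le_add
    (mul_le_mul_of_nonneg_left (Real.rpow_le_rpow hnA hA1 hp0) hs)
    (mul_le_mul_of_nonneg_left (Real.rpow_le_rpow hnB hB1 hp0) h0)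
end

section
/- Let n ≥ 1, let A, B ∈ Matrix n n ℂ be positive definite Hermitian matrices, and let τ ∈ [0,1]. Then (det((1−τ)A + τB))^{1/n} ≥ (1−τ) (det A)^{1/n} + τ (det B)^{1/n}; that is, τ ↦ (det((1−τ)A + τB))^{1/n} is concave on [0,1] (Minkowski's determinant inequality). -/
open scoped ComplexOrder

open scoped MatrixOrder in
lemma exists_conj_eq_one {n : ℕ} {C : Matrix (Fin n) (Fin n) ℂ} (hC : C.PosDef) :
    ∃ T : Matrix (Fin n) (Fin n) ℂ, T * C * T.conjTranspose = 1 := by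
  obtain ⟨b, ⟨u, rfl⟩, h⟩ :=
    CStarAlgebra.isStrictlyPositive_iff_eq_star_mul_self.mp hC.isStrictlyPositive
  refine ⟨star (↑u⁻¹ : Matrix (Fin n) (Fin n) ℂ), ?_⟩
  have h1 : star (↑u⁻¹ : Matrix (Fin n) (Fin n) ℂ) * star (↑u : Matrix (Fin n) (Fin n) ℂ) = 1 := by
    rw [← star_mul, Units.mul_inv, star_one]
  rw [h, ← mul_assoc, h1, one_mul, ← Matrix.star_eq_conjTranspose, star_star, Units.mul_inv]

lemma det_rpow_le_trace {n : ℕ} (hn : 1 ≤ n) {P : Matrix (Fin n) (Fin n) ℂ}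
    (hP : P.PosSemidef) : P.det.re ^ ((n : ℝ)⁻¹) ≤ P.trace.re / n := by
  have h1 : P.det.re = ∏ i, hP.1.eigenvalues i := by
    rw [hP.1.det_eq_prod_eigenvalues]
    have : (∏ i, ((hP.1.eigenvalues i : ℝ) : ℂ)) = ((∏ i, hP.1.eigenvalues i : ℝ) : ℂ) := by
      push_cast; rfl
    exact (congrArg Complex.re this).trans (Complex.ofReal_re _)
  have h2 : P.trace.re = ∑ i, hP.1.eigenvalues i := by
    rw [hP.1.trace_eq_sum_eigenvalues]
    simp
  have hn' : (0 : ℝ) < n := by exact_mod_cast hn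
  have := Real.geom_mean_le_arith_mean Finset.univ (fun _ : Fin n => (1 : ℝ)) hP.1.eigenvalues
    (by simp) (by simpa using hn') (fun i _ => hP.eigenvalues_nonneg i)
  simpa [h1, h2] using this

lemma det_conj_re {n : ℕ} (T A : Matrix (Fin n) (Fin n) ℂ) :
    (T * A * T.conjTranspose).det.re = Complex.normSq T.det * A.det.re := by
  rw [Matrix.det_mul, Matrix.det_mul, Matrix.det_conjTranspose, mul_right_comm, 
    Complex.star_def, Complex.mul_conj, Complex.re_ofReal_mul]

/-- Minkowski's determinant inequality: for positive definite Hermitian matrices `A`, `B`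
and `τ ∈ [0,1]`,
`(det((1−τ)A + τB))^{1/n} ≥ (1−τ)(det A)^{1/n} + τ (det B)^{1/n}`,
i.e. `τ ↦ (det((1−τ)A + τB))^{1/n}` is concave on `[0,1]`. -/
theorem minkowski_determinant
    (n : ℕ) (hn : 1 ≤ n)
    (A B : Matrix (Fin n) (Fin n) ℂ)
    (hA : A.PosDef) (hB : B.PosDef)
    (τ : ℝ) (hτ : τ ∈ Set.Icc (0 : ℝ) 1) :
    (1 - τ) * (A.det).re ^ ((n : ℝ)⁻¹) + τ * (B.det).re ^ ((n : ℝ)⁻¹)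
      ≤ (((1 - τ) • A + τ • B).det).re ^ ((n : ℝ)⁻¹) := by
  obtain ⟨h0, h1⟩ := hτ
  have hC : ((1 - τ) • A + τ • B).PosDef := by
    rcases h0.eq_or_lt with rfl | h0'
    · simpa using hA
    · exact Matrix.PosDef.posSemidef_add (hA.posSemidef.smul (sub_nonneg.2 h1)) (hB.smul h0')
  obtain ⟨T, hT⟩ := exists_conj_eq_one hC
  have hn' : (0 : ℝ) < n := by exact_mod_cast hn
  have hP := det_rpow_le_trace hn (hA.posSemidef.mul_mul_conjTranspose_same T)
  have hQ := det_rpow_le_trace hn (hB.posSemidef.mul_mul_conjTranspose_same T)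
  have hdC := congrArg (fun M => M.det.re) hT
  have htr := congrArg (fun M => M.trace.re) hT
  simp only [det_conj_re] at hP hQ hdC
  have hk := Complex.normSq_nonneg T.det
  have hA0 : 0 ≤ A.det.re := (Complex.le_def.1 hA.posSemidef.det_nonneg).1
  have hB0 : 0 ≤ B.det.re := (Complex.le_def.1 hB.posSemidef.det_nonneg).1
  have hC0 : 0 ≤ ((1 - τ) • A + τ • B).det.re :=
    (Complex.le_def.1 hC.posSemidef.det_nonneg).1
  have hdC' := congrArg (fun x : ℝ => x ^ ((n : ℝ)⁻¹)) hdC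
  simp only [Matrix.det_one, Complex.one_re, Real.one_rpow] at hdC'
  rw [Real.mul_rpow hk hC0] at hdC'
  rw [Real.mul_rpow hk hA0] at hP
  rw [Real.mul_rpow hk hB0] at hQ
  have htr' : (1 - τ) * (T * A * T.conjTranspose).trace.re
      + τ * (T * B * T.conjTranspose).trace.re = n := by
    simpa [mul_add, add_mul] using htr
  have hkpos : 0 < Complex.normSq T.det ^ ((n : ℝ)⁻¹) := by
    refine lt_of_le_of_ne (Real.rpow_nonneg hk _) fun h => ?_
    rw [← h] at hdC'
    simp at hdC'
  refine le_of_mul_le_mul_left ?_ hkpos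
  rw [hdC']
  have e1 := mul_le_mul_of_nonneg_left hP (sub_nonneg.2 h1)
  have e2 := mul_le_mul_of_nonneg_left hQ h0
  have e3 : (1 - τ) * ((T * A * T.conjTranspose).trace.re / n)
      + τ * ((T * B * T.conjTranspose).trace.re / n) = 1 := by
    rw [← mul_div_assoc, ← mul_div_assoc, ← add_div, htr', div_self hn'.ne']
  linarith
end

section
/- Let n ≥ 1, let A, B ∈ Matrix n n ℂ be positive definite Hermitian matrices with Tr A = Tr B = 1 (density matrices), and let τ ∈ [0,1]. Define the von Neumann entropy S(M) := −Tr(M log M) for positive definite Hermitian M. Then S((1−τ)A + τB) ≤ (1−τ)² S(A) + τ² S(B) − τ(1−τ) Tr(A log B + B log A). -/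
open scoped ComplexOrder

section aux
open scoped MatrixOrder Matrix.Norms.L2Operator

/-- Operator concavity of the logarithm, for matrices. -/
theorem aux_log_concave (n : ℕ)
    (A B : Matrix (Fin n) (Fin n) ℂ)
    (hA : A.PosDef) (hB : B.PosDef)
    (τ : ℝ) (hτ : τ ∈ Set.Icc (0 : ℝ) 1)
    (hC : ((1 - τ) • A + τ • B).PosDef) :
    (hC.1.cfc Real.log - ((1 - τ) • hA.1.cfc Real.log + τ • hB.1.cfc Real.log)).PosSemidef := by
  have h := (CFC.concaveOn_log (A := Matrix (Fin n) (Fin n) ℂ)).2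
    (Matrix.isStrictlyPositive_iff_posDef.2 hA) (Matrix.isStrictlyPositive_iff_posDef.2 hB)
    (sub_nonneg.2 hτ.2) hτ.1 (by ring)
  rw [Matrix.le_iff] at h
  rw [← hA.1.cfc_eq, ← hB.1.cfc_eq, ← hC.1.cfc_eq]
  exact h

/-- The trace of a product of positive semidefinite matrices is nonnegative. -/
theorem aux_trace_mul_nonneg (n : ℕ) (C D : Matrix (Fin n) (Fin n) ℂ)
    (hC : C.PosSemidef) (hD : D.PosSemidef) : 0 ≤ (C * D).trace.re := by
  obtain ⟨X, rfl⟩ := CStarAlgebra.nonneg_iff_eq_star_mul_self.1 hC.nonneg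
  have h := (hD.mul_mul_conjTranspose_same X).trace_nonneg
  rw [Matrix.trace_mul_comm, ← mul_assoc, Matrix.trace_mul_comm, ← mul_assoc]
  exact (Complex.le_def.1 h).1

end aux

/-- Almost-concavity of the von Neumann entropy `S(M) = −Tr(M log M)` of density matrices:
for positive definite Hermitian `A`, `B` with `Tr A = Tr B = 1` and `τ ∈ [0,1]`,
`S((1−τ)A + τB) ≤ (1−τ)² S(A) + τ² S(B) − τ(1−τ) Tr(A log B + B log A)`,
where `log M` is the functional calculus applied with `Real.log`. -/
theorem von_neumann_entropy_inequality
    (n : ℕ) (hn : 1 ≤ n)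
    (A B : Matrix (Fin n) (Fin n) ℂ)
    (hA : A.PosDef) (hB : B.PosDef)
    (htrA : A.trace = 1) (htrB : B.trace = 1)
    (τ : ℝ) (hτ : τ ∈ Set.Icc (0 : ℝ) 1)
    (hC : ((1 - τ) • A + τ • B).PosDef) :
    -((((1 - τ) • A + τ • B) * hC.1.cfc Real.log).trace).re
      ≤ (1 - τ) ^ 2 * (-((A * hA.1.cfc Real.log).trace).re)
        + τ ^ 2 * (-((B * hB.1.cfc Real.log).trace).re)
        - τ * (1 - τ) * ((A * hB.1.cfc Real.log + B * hA.1.cfc Real.log).trace).re := by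
  have h := aux_trace_mul_nonneg n _ _ hC.posSemidef (aux_log_concave n A B hA hB τ hτ hC)
  generalize hC.1.cfc Real.log = L at *
  generalize hA.1.cfc Real.log = LA at *
  generalize hB.1.cfc Real.log = LB at *
  simp only [mul_sub, mul_add, add_mul, Matrix.smul_mul, Matrix.mul_smul, Matrix.trace_add,
    Matrix.trace_sub, Matrix.trace_smul, Complex.add_re, Complex.sub_re, Complex.smul_re,
    smul_eq_mul] at h ⊢
  nlinarith [h]
end

section
/- Let n ≥ 1, let A, B ∈ Matrix n n ℂ be Hermitian matrices with eigenvalues, counted with multiplicity and ordered nondecreasingly, α_1 ≤ … ≤ α_n and β_1 ≤ … ≤ β_n respectively. For τ ∈ [0,1] let λ_1(τ) ≤ … ≤ λ_n(τ) denote the nondecreasingly ordered eigenvalues of (1−τ)A + τB. Then for every 1 ≤ m ≤ n and every τ ∈ [0,1]: (i) Σ_{j=1}^m ((1−τ)α_j + τβ_j) ≤ Σ_{j=1}^m λ_j(τ), and (ii) Σ_{j=1}^m λ_j(τ) ≤ Σ_{j=1}^m [(1−τ)² α_j + τ² β_j + τ(1−τ)(α_{n+1−j} + β_{n+1−j})].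 In particular (taking τ = 1/2 and rescaling), Σ_{j=1}^m (α_j + β_j) ≤ Σ_{j=1}^m λ_j(A+B) ≤ (1/2) Σ_{j=1}^m (α_j + β_j + α_{n+1−j} + β_{n+1−j}), where λ_1(A+B) ≤ … ≤ λ_n(A+B) are the nondecreasingly ordered eigenvalues of A+B. -/
open scoped BigOperators

namespace EigSum

noncomputable def q {n : ℕ} (A : Matrix (Fin n) (Fin n) ℂ) (x : EuclideanSpace ℂ (Fin n)) : ℝ :=
  (inner ℂ x (Matrix.toEuclideanLin A x)).re

lemma q_add {n : ℕ} (A B : Matrix (Fin n) (Fin n) ℂ) (x : EuclideanSpace ℂ (Fin n)) :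
    q (A + B) x = q A x + q B x := by
  simp [q, map_add, inner_add_right]

lemma q_smul {n : ℕ} (t : ℝ) (A : Matrix (Fin n) (Fin n) ℂ) (x : EuclideanSpace ℂ (Fin n)) :
    q (t • A) x = t * q A x := by
  have h : t • A = (t : ℂ) • A := by ext i j; simp
  rw [h]
  unfold q
  rw [map_smul, LinearMap.smul_apply, inner_smul_right, Complex.re_ofReal_mul]

lemma exists_basis {n : ℕ} {A : Matrix (Fin n) (Fin n) ℂ} (hA : A.IsHermitian) {α : Fin n → ℝ}
    (h : ∃ σ : Equiv.Perm (Fin n), α = hA.eigenvalues ∘ σ) :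
    ∃ v : OrthonormalBasis (Fin n) ℂ (EuclideanSpace ℂ (Fin n)),
      ∀ i, Matrix.toEuclideanLin A (v i) = (α i : ℂ) • v i := by
  obtain ⟨σ, rfl⟩ := h
  refine ⟨hA.eigenvectorBasis.reindex σ.symm, fun i => ?_⟩
  have := hA.mulVec_eigenvectorBasis (σ i)
  ext k
  have := congrFun this k
  simpa [Matrix.toEuclideanLin] using this

lemma q_expand {n : ℕ} {A : Matrix (Fin n) (Fin n) ℂ} (hA : A.IsHermitian) {α : Fin n → ℝ}
    (v : OrthonormalBasis (Fin n) ℂ (EuclideanSpace ℂ (Fin n)))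
    (hv : ∀ i, Matrix.toEuclideanLin A (v i) = (α i : ℂ) • v i) (u : EuclideanSpace ℂ (Fin n)) :
    q A u = ∑ i, α i * ‖inner ℂ (v i) u‖ ^ 2 := by
  have hs := Matrix.isSymmetric_toEuclideanLin_iff.mpr hA
  unfold q
  rw [← v.sum_inner_mul_inner u, Complex.re_sum]
  refine Finset.sum_congr rfl fun i _ => ?_
  rw [← hs (v i) u, hv i, inner_smul_left, ← inner_conj_symm u (v i), mul_left_comm,
    ← Complex.normSq_eq_conj_mul_self, Complex.normSq_eq_norm_sq]
  simp [← Complex.ofReal_pow]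

lemma card_lt {n m : ℕ} (hmn : m ≤ n) :
    (Finset.univ.filter (fun j : Fin n => (j : ℕ) < m)).card = m := by
  rw [Fin.card_filter_val_lt, min_eq_right hmn]

lemma weights {n : ℕ} {m : ℕ} (hm1 : 1 ≤ m) (hmn : m ≤ n) (α w : Fin n → ℝ) (hα : Monotone α)
    (h0 : ∀ i, 0 ≤ w i) (h1 : ∀ i, w i ≤ 1) (hs : ∑ i, w i = m) :
    ∑ j ∈ Finset.univ.filter (fun j : Fin n => (j : ℕ) < m), α j ≤ ∑ i, α i * w i := by
  set c := α ⟨m - 1, by omega⟩ with hc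
  have key : ∀ i : Fin n, 0 ≤ (α i - c) * (w i - if (i : ℕ) < m then 1 else 0) := by
    intro i
    split_ifs with h
    · have : α i ≤ c := hα (Fin.le_def.mpr (by simp; omega))
      nlinarith [h1 i]
    · have : c ≤ α i := hα (Fin.le_def.mpr (by simp; omega))
      nlinarith [h0 i]
  have := Finset.sum_nonneg fun i (_ : i ∈ Finset.univ) => key i
  have hcard : ∑ i : Fin n, (if (i : ℕ) < m then (1 : ℝ) else 0) = m := by
    simp [card_lt hmn]
  have e : ∑ i : Fin n, (α i - c) * (w i - if (i : ℕ) < m then 1 else 0)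
      = ∑ i, α i * w i - c * ∑ i, w i - ∑ i : Fin n, (if (i : ℕ) < m then α i else 0)
        + c * ∑ i : Fin n, (if (i : ℕ) < m then (1 : ℝ) else 0) := by
    rw [Finset.mul_sum, Finset.mul_sum, ← Finset.sum_sub_distrib, ← Finset.sum_sub_distrib,
      ← Finset.sum_add_distrib]
    refine Finset.sum_congr rfl fun i _ => ?_
    split_ifs <;> ring
  rw [Finset.sum_filter]
  rw [e, hs, hcard] at this
  linarith

lemma bounds {n : ℕ} {m : ℕ} (hm1 : 1 ≤ m) (hmn : m ≤ n)
    {A : Matrix (Fin n) (Fin n) ℂ} (hA : A.IsHermitian) {α : Fin n → ℝ} (hα : Monotone α)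
    (h : ∃ σ : Equiv.Perm (Fin n), α = hA.eigenvalues ∘ σ)
    (u : OrthonormalBasis (Fin n) ℂ (EuclideanSpace ℂ (Fin n))) :
    ∑ j ∈ Finset.univ.filter (fun j : Fin n => (j : ℕ) < m), α j
      ≤ ∑ j ∈ Finset.univ.filter (fun j : Fin n => (j : ℕ) < m), q A (u j) ∧
    ∑ j ∈ Finset.univ.filter (fun j : Fin n => (j : ℕ) < m), q A (u j)
      ≤ ∑ j ∈ Finset.univ.filter (fun j : Fin n => (j : ℕ) < m), α j.rev := by
  obtain ⟨v, hv⟩ := exists_basis hA h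
  set w : Fin n → ℝ := fun i =>
    ∑ j ∈ Finset.univ.filter (fun j : Fin n => (j : ℕ) < m), ‖inner ℂ (v i) (u j)‖ ^ 2 with hw
  have e : ∑ j ∈ Finset.univ.filter (fun j : Fin n => (j : ℕ) < m), q A (u j)
      = ∑ i, α i * w i := by
    simp_rw [q_expand hA v hv, hw, Finset.mul_sum]
    rw [Finset.sum_comm]
  have h0 : ∀ i, 0 ≤ w i := fun i => Finset.sum_nonneg fun j _ => by positivity
  have h1 : ∀ i, w i ≤ 1 := fun i => by
    have h2 : ∑ j, ‖inner ℂ (v i) (u j)‖ ^ 2 = 1 := by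
      rw [u.sum_sq_norm_inner_left]; simp
    rw [← h2]
    exact Finset.sum_le_sum_of_subset_of_nonneg (Finset.filter_subset _ _)
      fun j _ _ => by positivity
  have hs : ∑ i, w i = m := by
    rw [hw, Finset.sum_comm]
    have h2 : ∀ j, ∑ i, ‖inner ℂ (v i) (u j)‖ ^ 2 = 1 := fun j => by
      rw [v.sum_sq_norm_inner_right]; simp
    simp [h2, card_lt hmn]
  rw [e]
  refine ⟨weights hm1 hmn α w hα h0 h1 hs, ?_⟩
  have h3 := weights hm1 hmn (fun i => - α i.rev) (fun i => w i.rev)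
    (fun a b hab => neg_le_neg (hα (Fin.rev_le_rev.mpr hab))) (fun i => h0 _) (fun i => h1 _)
    (by rw [← hs]; exact Equiv.sum_comp Fin.revPerm w)
  have h4 : ∑ i : Fin n, α i.rev * w i.rev = ∑ i, α i * w i :=
    Equiv.sum_comp Fin.revPerm (fun i => α i * w i)
  simp only [neg_mul, Finset.sum_neg_distrib, h4] at h3
  linarith

lemma attained {n : ℕ} {A : Matrix (Fin n) (Fin n) ℂ} (hA : A.IsHermitian) {α : Fin n → ℝ}
    (h : ∃ σ : Equiv.Perm (Fin n), α = hA.eigenvalues ∘ σ) :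
    ∃ v : OrthonormalBasis (Fin n) ℂ (EuclideanSpace ℂ (Fin n)), ∀ i, q A (v i) = α i := by
  obtain ⟨v, hv⟩ := exists_basis hA h
  refine ⟨v, fun i => ?_⟩
  rw [q, hv, inner_smul_right]
  simp

/-- Bounds for a combination `C = s A + t B` with nonnegative coefficients. -/
lemma main {n m : ℕ} (hm1 : 1 ≤ m) (hmn : m ≤ n)
    {A B C : Matrix (Fin n) (Fin n) ℂ} (hA : A.IsHermitian) (hB : B.IsHermitian)
    (hC : C.IsHermitian) {α β γ : Fin n → ℝ}
    (hα : Monotone α) (hβ : Monotone β) (hγ : Monotone γ)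
    (hαe : ∃ σ : Equiv.Perm (Fin n), α = hA.eigenvalues ∘ σ)
    (hβe : ∃ σ : Equiv.Perm (Fin n), β = hB.eigenvalues ∘ σ)
    (hγe : ∃ σ : Equiv.Perm (Fin n), γ = hC.eigenvalues ∘ σ)
    {s t : ℝ} (hs : 0 ≤ s) (ht : 0 ≤ t) (hq : ∀ x, q C x = s * q A x + t * q B x)
    (S : Finset (Fin n)) (hS : S = Finset.univ.filter (fun j : Fin n => (j : ℕ) < m)) :
    s * ∑ j ∈ S, α j + t * ∑ j ∈ S, β j ≤ ∑ j ∈ S, γ j ∧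
    ∑ j ∈ S, γ j ≤ s * ∑ j ∈ S, α j + t * ∑ j ∈ S, β j.rev ∧
    ∑ j ∈ S, γ j ≤ s * ∑ j ∈ S, α j.rev + t * ∑ j ∈ S, β j := by
  obtain ⟨a, ha⟩ := attained hA hαe
  obtain ⟨b, hb⟩ := attained hB hβe
  obtain ⟨c, hc⟩ := attained hC hγe
  have key : ∀ u : OrthonormalBasis (Fin n) ℂ (EuclideanSpace ℂ (Fin n)),
      ∑ j ∈ S, q C (u j) = s * ∑ j ∈ S, q A (u j) + t * ∑ j ∈ S, q B (u j) := fun u => by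
    simp_rw [hq, Finset.sum_add_distrib, Finset.mul_sum]
  have bA := bounds hm1 hmn hA hα hαe
  have bB := bounds hm1 hmn hB hβ hβe
  have bC := bounds hm1 hmn hC hγ hγe
  rw [← hS] at bA bB bC
  refine ⟨?_, ?_, ?_⟩
  · have k := key c
    simp_rw [hc] at k
    rw [k]
    exact add_le_add (mul_le_mul_of_nonneg_left (bA c).1 hs)
      (mul_le_mul_of_nonneg_left (bB c).1 ht)
  · refine (bC a).1.trans ?_
    rw [key a]
    simp_rw [ha]
    exact add_le_add le_rfl (mul_le_mul_of_nonneg_left (bB a).2 ht)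
  · refine (bC b).1.trans ?_
    rw [key b]
    simp_rw [hb]
    exact add_le_add (mul_le_mul_of_nonneg_left (bA b).2 hs) le_rfl

end EigSum

/-- Eigenvalue inequalities for convex combinations and sums of Hermitian matrices.
`α`, `β`, `lam τ` and `μ` are the nondecreasing rearrangements of the eigenvalues (with
multiplicity) of `A`, `B`, `(1−τ)A + τB` and `A + B` respectively (0-based indexing, so
`Σ_{j=1}^m` becomes a sum over `j : Fin n` with `(j : ℕ) < m`, and the index `n+1−j` of the
statement becomes `Fin.rev j`). -/
theorem eigenvalue_sum_inequalities
    (n : ℕ) (hn : 1 ≤ n)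
    (A B : Matrix (Fin n) (Fin n) ℂ)
    (hA : A.IsHermitian) (hB : B.IsHermitian)
    (α β : Fin n → ℝ)
    (hαmono : Monotone α) (hβmono : Monotone β)
    (hαeig : ∃ σ : Equiv.Perm (Fin n), α = hA.eigenvalues ∘ σ)
    (hβeig : ∃ σ : Equiv.Perm (Fin n), β = hB.eigenvalues ∘ σ)
    (hC : ∀ τ : ℝ, ((1 - τ) • A + τ • B).IsHermitian)
    (lam : ℝ → Fin n → ℝ)
    (hlammono : ∀ τ : ℝ, Monotone (lam τ))
    (hlameig : ∀ τ : ℝ, ∃ σ : Equiv.Perm (Fin n), lam τ = (hC τ).eigenvalues ∘ σ)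
    (hAB : (A + B).IsHermitian)
    (μ : Fin n → ℝ)
    (hμmono : Monotone μ)
    (hμeig : ∃ σ : Equiv.Perm (Fin n), μ = hAB.eigenvalues ∘ σ)
    (m : ℕ) (hm1 : 1 ≤ m) (hmn : m ≤ n)
    (τ : ℝ) (hτ : τ ∈ Set.Icc (0 : ℝ) 1) :
    (∑ j ∈ Finset.univ.filter (fun j : Fin n => (j : ℕ) < m), ((1 - τ) * α j + τ * β j)
        ≤ ∑ j ∈ Finset.univ.filter (fun j : Fin n => (j : ℕ) < m), lam τ j)
    ∧ (∑ j ∈ Finset.univ.filter (fun j : Fin n => (j : ℕ) < m), lam τ j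
        ≤ ∑ j ∈ Finset.univ.filter (fun j : Fin n => (j : ℕ) < m),
            ((1 - τ) ^ 2 * α j + τ ^ 2 * β j + τ * (1 - τ) * (α j.rev + β j.rev)))
    ∧ (∑ j ∈ Finset.univ.filter (fun j : Fin n => (j : ℕ) < m), (α j + β j)
        ≤ ∑ j ∈ Finset.univ.filter (fun j : Fin n => (j : ℕ) < m), μ j)
    ∧ (∑ j ∈ Finset.univ.filter (fun j : Fin n => (j : ℕ) < m), μ j
        ≤ (1 / 2) * ∑ j ∈ Finset.univ.filter (fun j : Fin n => (j : ℕ) < m),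
            (α j + β j + α j.rev + β j.rev)) := by
  obtain ⟨h0, h1⟩ := hτ
  have h1' : 0 ≤ 1 - τ := by linarith
  obtain ⟨p1, p2, p3⟩ := EigSum.main hm1 hmn hA hB (hC τ) hαmono hβmono (hlammono τ) hαeig hβeig
    (hlameig τ) h1' h0 (fun x => by rw [EigSum.q_add, EigSum.q_smul, EigSum.q_smul]) _ rfl
  obtain ⟨r1, r2, r3⟩ := EigSum.main hm1 hmn hA hB hAB hαmono hβmono hμmono hαeig hβeig
    hμeig zero_le_one zero_le_one (fun x => by rw [EigSum.q_add, one_mul, one_mul]) _ rfl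
  simp only [Finset.sum_add_distrib, ← Finset.mul_sum]
  refine ⟨p1, ?_, by linarith, by linarith⟩
  have k2 := mul_le_mul_of_nonneg_left p2 h1'
  have k3 := mul_le_mul_of_nonneg_left p3 h0
  linarith
end
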